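/- arXiv:1812.04490 — 2 statements merged into one kernel-verified Lean document; each statement's English description precedes it below -/
import Mathlib

section
/- For every positive integer n, integers b_1, …, b_n, and positive integers a_1, …, a_n, the constant terms satisfy the recursion c_n(a; b) = Σ_{i=1}^n c_n(⟨a_1, …, a_{i−1}, a_i − 1, a_{i+1}, …, a_n⟩; b). -/
/-- The polynomial `∏_{1 ≤ i ≠ j ≤ n} (x_j - x_i)^{a_j}` over `ℤ`. -/
noncomputable def dysonPoly (n : ℕ) (a : Fin n → ℕ) : MvPolynomial (Fin n) ℤ :=
  ∏ j : Fin n, ∏ i ∈ Finset.univ.erase j, (MvPolynomial.X j - MvPolynomial.X i) ^ a j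

/-- The constant term `c_n(a; b)` of the Laurent polynomial
`F_n(x; a; b) = ∏_h x_h^{-b_h} ∏_{1 ≤ i ≠ j ≤ n} (1 - x_i/x_j)^{a_j}`, i.e. the
coefficient of `∏_j x_j^{(n-1)a_j + b_j}` in `∏_{1 ≤ i ≠ j ≤ n} (x_j - x_i)^{a_j}`,
taken to be `0` if some exponent `(n-1)a_j + b_j` is negative. -/
noncomputable def dysonCT (n : ℕ) (a : Fin n → ℕ) (b : Fin n → ℤ) : ℤ :=
  if ∀ j, 0 ≤ ((n : ℤ) - 1) * a j + b j then
    MvPolynomial.coeff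
      (Finsupp.equivFunOnFinite.symm fun j => (((n : ℤ) - 1) * a j + b j).toNat)
      (dysonPoly n a)
  else 0

/-!
Interpolating `t ^ (n - 1)` at the nodes `x_1, …, x_n` and comparing leading coefficients gives
`∑ i, x_i ^ (n - 1) / ∏_{k ≠ i} (x_i - x_k) = 1`. Since lowering `a_i` by one removes exactly the
factor `∏_{k ≠ i} (x_i - x_k)` from `dysonPoly n a`, multiplying by `dysonPoly n a` yields a
recursion between polynomials. Lowering `a_i` also lowers by `n - 1` the exponent of `x_i` at which
`dysonCT` takes the coefficient, and this absorbs the factor `x_i ^ (n - 1)`.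
-/

open Finset Function MvPolynomial

theorem leadingCoeff_mul_eq_sum_eval_mul {R ι : Type*} [CommRing R] [IsDomain R] [DecidableEq ι]
    {s : Finset ι} {v : ι → R} (hv : Set.InjOn v s) {f : Polynomial R} (hf : #s = f.degree + 1)
    {p : R} {q : ι → R} (hpq : ∀ i ∈ s, p = (∏ k ∈ s.erase i, (v i - v k)) * q i) :
    f.leadingCoeff * p = ∑ i ∈ s, f.eval (v i) * q i := by
  let φ := algebraMap R (FractionRing R)
  have hφ : Injective φ := IsFractionRing.injective R (FractionRing R)
  have lagrange : φ f.leadingCoeff =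
      ∑ i ∈ s, φ (f.eval (v i)) / φ (∏ k ∈ s.erase i, (v i - v k)) := by
    simpa [Polynomial.leadingCoeff_map_of_injective hφ] using
      Lagrange.leadingCoeff_eq_sum (hφ.comp_injOn hv)
        (hf.trans (congrArg (· + 1) (Polynomial.degree_map_eq_of_injective hφ f).symm))
  apply hφ
  rw [map_mul, lagrange, sum_mul, map_sum]
  refine sum_congr rfl fun i hi => ?_
  have nodes_ne : φ (∏ k ∈ s.erase i, (v i - v k)) ≠ 0 := by
    refine (map_ne_zero_iff φ hφ).2 (prod_ne_zero_iff.2 fun k hk => sub_ne_zero.2 fun h => ?_)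
    exact ne_of_mem_erase hk (hv hi (mem_of_mem_erase hk) h).symm
  rw [hpq i hi, map_mul, map_mul, ← mul_assoc, div_mul_cancel₀ _ nodes_ne]

section IntCoeff

variable {σ R : Type*} [Finite σ] [CommSemiring R]

open Classical in
/-- The coefficient of `∏ j, x_j ^ m_j`, for integer exponents `m`, in a polynomial regarded as a
Laurent polynomial: it is zero as soon as some `m j` is negative, and otherwise no information is
lost by `Int.toNat`. -/
noncomputable def intCoeff (m : σ → ℤ) : MvPolynomial σ R →ₗ[R] R :=
  if 0 ≤ m then lcoeff R (Finsupp.equivFunOnFinite.symm fun j => (m j).toNat) else 0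

theorem intCoeff_natCast (d : σ →₀ ℕ) (p : MvPolynomial σ R) :
    intCoeff (fun j => (d j : ℤ)) p = coeff d p := by
  have hd : (0 : σ → ℤ) ≤ fun j => (d j : ℤ) := fun j => Int.natCast_nonneg (d j)
  simp [intCoeff, hd]

theorem intCoeff_of_neg {m : σ → ℤ} {j : σ} (hj : m j < 0) (p : MvPolynomial σ R) :
    intCoeff m p = 0 := by
  have hm : ¬ 0 ≤ m := fun h => hj.not_ge (h j)
  simp [intCoeff, hm]

theorem intCoeff_monomial_mul (m : σ → ℤ) (e : σ →₀ ℕ) (r : R) (p : MvPolynomial σ R) :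
    intCoeff m (monomial e r * p) = r * intCoeff (fun j => m j - e j) p := by
  by_cases hm : 0 ≤ m
  · obtain ⟨d, rfl⟩ : ∃ d : σ →₀ ℕ, m = fun j => (d j : ℤ) :=
      ⟨Finsupp.equivFunOnFinite.symm fun j => (m j).toNat,
        funext fun j => (Int.toNat_of_nonneg (hm j)).symm⟩
    rw [intCoeff_natCast, coeff_monomial_mul']
    split_ifs with hed
    · have hsub : (fun j => (d j : ℤ) - e j) = fun j => ((d - e) j : ℤ) :=
        funext fun j => (Nat.cast_sub (hed j)).symm
      rw [hsub, intCoeff_natCast]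
    · obtain ⟨j, hj⟩ : ∃ j, d j < e j := by simpa [Finsupp.le_def] using hed
      rw [intCoeff_of_neg (j := j) (by lia), mul_zero]
  · obtain ⟨j, hj⟩ : ∃ j, m j < 0 := by simpa [Pi.le_def] using hm
    rw [intCoeff_of_neg hj, intCoeff_of_neg (j := j) (by lia), mul_zero]

theorem intCoeff_X_pow_mul [DecidableEq σ] (m : σ → ℤ) (i : σ) (k : ℕ) (p : MvPolynomial σ R) :
    intCoeff m (X i ^ k * p) = intCoeff (m - Pi.single i (k : ℤ)) p := by
  rw [X_pow_eq_monomial, intCoeff_monomial_mul, one_mul]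
  congr 2 with j
  simp [Finsupp.single_apply, Pi.single_apply, eq_comm]

end IntCoeff

section Dyson

variable {n : ℕ} (a : Fin n → ℕ)

theorem dysonPoly_eq_prod_sub_mul_dysonPoly_update {i : Fin n} (hi : 1 ≤ a i) :
    dysonPoly n a = (∏ k ∈ univ.erase i, (X i - X k)) * dysonPoly n (update a i (a i - 1)) := by
  unfold dysonPoly
  rw [← mul_prod_erase univ _ (mem_univ i), ← mul_prod_erase univ _ (mem_univ i), ← mul_assoc]
  congr 1
  · simp only [update_self, ← prod_mul_distrib, ← pow_succ', Nat.sub_add_cancel hi]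
  · refine prod_congr rfl fun j hj => ?_
    rw [update_of_ne (ne_of_mem_erase hj)]

theorem dysonPoly_eq_sum_X_pow_mul (hn : 0 < n) (ha : ∀ i, 1 ≤ a i) :
    dysonPoly n a = ∑ i, X i ^ (n - 1) * dysonPoly n (update a i (a i - 1)) := by
  have hcard : #(univ : Finset (Fin n)) =
      (Polynomial.X ^ (n - 1) : Polynomial (MvPolynomial (Fin n) ℤ)).degree + 1 := by
    rw [card_fin, Polynomial.degree_X_pow]
    exact_mod_cast (Nat.sub_add_cancel hn).symm
  simpa using leadingCoeff_mul_eq_sum_eval_mul (X_injective (R := ℤ)).injOn hcard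
    fun i _ => dysonPoly_eq_prod_sub_mul_dysonPoly_update a (ha i)

variable (b : Fin n → ℤ)

/-- The exponents `(n - 1) a_j + b_j` of the monomial whose coefficient in `dysonPoly n a` is
`dysonCT n a b`; they are integers because `b` may have negative entries. -/
def dysonExponent : Fin n → ℤ :=
  fun j => ((n : ℤ) - 1) * a j + b j

theorem dysonExponent_update_pred {i : Fin n} (hi : 1 ≤ a i) :
    dysonExponent (update a i (a i - 1)) b =
      dysonExponent a b - Pi.single i ((n - 1 : ℕ) : ℤ) := by
  ext j
  obtain rfl | hji := eq_or_ne j i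
  · simp only [dysonExponent, update_self, Pi.sub_apply, Pi.single_eq_same,
      Nat.cast_pred j.pos, Nat.cast_pred hi]
    ring
  · simp [dysonExponent, hji]

theorem dysonCT_eq_intCoeff : dysonCT n a b = intCoeff (dysonExponent a b) (dysonPoly n a) := by
  by_cases h : ∀ j, 0 ≤ ((n : ℤ) - 1) * a j + b j <;>
    simp [dysonCT, intCoeff, dysonExponent, Pi.le_def, h]

end Dyson

/-- Good's recursion for the constant terms: for `a_1, …, a_n ≥ 1`,
`c_n(a; b) = ∑_{i=1}^n c_n(⟨a_1, …, a_i - 1, …, a_n⟩; b)`. -/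
theorem dysonCT_recursion (n : ℕ) (hn : 0 < n) (b : Fin n → ℤ) (a : Fin n → ℕ)
    (ha : ∀ i, 1 ≤ a i) :
    dysonCT n a b
      = ∑ i : Fin n, dysonCT n (Function.update a i (a i - 1)) b := by
  calc dysonCT n a b
    _ = intCoeff (dysonExponent a b) (dysonPoly n a) := dysonCT_eq_intCoeff a b
    _ = ∑ i, intCoeff (dysonExponent a b) (X i ^ (n - 1) * dysonPoly n (update a i (a i - 1))) := by
      rw [dysonPoly_eq_sum_X_pow_mul a hn ha, map_sum]
    _ = ∑ i, dysonCT n (update a i (a i - 1)) b := by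
      refine sum_congr rfl fun i _ => ?_
      rw [intCoeff_X_pow_mul, ← dysonExponent_update_pred a b (ha i), dysonCT_eq_intCoeff]
end

section
/- For all nonnegative integers a_2, a_3, the boundary identity c_3(⟨0, a_2, a_3⟩; ⟨2, −1, −1⟩) = (a_3(a_3 − 1)/2) · c_2(⟨a_2, a_3⟩; ⟨−1, 1⟩) + (a_2(a_2 − 1)/2) · c_2(⟨a_2, a_3⟩; ⟨1, −1⟩) + a_2 a_3 · c_2(⟨a_2, a_3⟩; ⟨0, 0⟩) holds. -/
/-!
Index the variables of `F_{n+1}` by `0, …, n`. If `a_0 = 0` the factors `1 - x_i / x_0` disappear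
and `F_{n+1} = x_0^{-k} ∏_j (1 - x_0 / x_j)^{a_j} F_n`. Expanding the product binomially and
collecting `x_0^k` writes the constant term as a sum, over the ways `d` of distributing `k` among
`x_1, …, x_n`, of the constant terms `c_n(a; b + d)`.
-/

open Finset

section BinomialProduct

lemma coeff_prod_eq_sum_piAntidiag {R ι : Type*} [CommSemiring R] [DecidableEq ι]
    (s : Finset ι) (f : ι → Polynomial R) (k : ℕ) :
    (∏ i ∈ s, f i).coeff k = ∑ d ∈ s.piAntidiag k, ∏ i ∈ s, (f i).coeff (d i) := by
  rw [← Polynomial.coeff_coe, ← Polynomial.coeToPowerSeries.ringHom_apply, map_prod,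
    PowerSeries.coeff_prod]
  refine sum_bij' (fun d _ ↦ ⇑d)
    (fun d hd ↦ Finsupp.onFinset s d fun i ↦ (mem_piAntidiag.mp hd).2 i) ?_ ?_ ?_ ?_ ?_
  · simp [subset_iff]
  · simp [subset_iff]
  · intros; ext; simp
  · simp
  · simp

lemma coeff_C_sub_X_pow {R : Type*} [CommRing R] (u : R) (n k : ℕ) :
    ((Polynomial.C u - Polynomial.X) ^ n).coeff k = (-1) ^ k * n.choose k * u ^ (n - k) := by
  have eq_comp_neg_X : (Polynomial.C u - Polynomial.X) ^ n =
      ((Polynomial.X + Polynomial.C u) ^ n).comp (Polynomial.C (-1) * Polynomial.X) := by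
    simp [sub_eq_neg_add]
  rw [eq_comp_neg_X, Polynomial.comp_C_mul_X_coeff, Polynomial.coeff_X_add_C_pow]
  ring

lemma coeff_prod_C_X_sub_X_pow {σ R : Type*} [Fintype σ] [DecidableEq σ] [CommRing R]
    (a : σ → ℕ) (k : ℕ) :
    (∏ i, (Polynomial.C (MvPolynomial.X i : MvPolynomial σ R) - Polynomial.X) ^ a i).coeff k =
      ∑ d ∈ univ.piAntidiag k,
        MvPolynomial.monomial (Finsupp.equivFunOnFinite.symm (a - d))
          ((-1) ^ k * ∏ i, ((a i).choose (d i) : R)) := by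
  rw [coeff_prod_eq_sum_piAntidiag]
  refine sum_congr rfl fun d hd ↦ ?_
  rw [← (mem_piAntidiag.mp hd).1, ← prod_pow_eq_pow_sum, ← prod_mul_distrib,
    Finsupp.equivFunOnFinite_symm_eq_sum, MvPolynomial.monomial_sum_prod]
  refine prod_congr rfl fun i _ ↦ ?_
  rw [coeff_C_sub_X_pow, Pi.sub_apply, ← MvPolynomial.C_mul_X_pow_eq_monomial]
  simp

end BinomialProduct

section LaurentCoeff

variable {σ R : Type*} [Finite σ] [CommSemiring R]

open Classical in
/-- The coefficient of the Laurent monomial `∏_i x_i^{e_i}` in a polynomial, as a linear functional.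
It vanishes when some `e_i` is negative, so exponents can be shifted without case distinctions. -/
noncomputable def laurentCoeff (e : σ → ℤ) : MvPolynomial σ R →ₗ[R] R :=
  if ∀ i, 0 ≤ e i then
    MvPolynomial.lcoeff R (Finsupp.equivFunOnFinite.symm fun i ↦ (e i).toNat)
  else 0

lemma laurentCoeff_natCast (m : σ →₀ ℕ) (p : MvPolynomial σ R) :
    laurentCoeff (fun i ↦ (m i : ℤ)) p = p.coeff m := by
  simp [laurentCoeff]

lemma laurentCoeff_of_neg {e : σ → ℤ} {i : σ} (hi : e i < 0) (p : MvPolynomial σ R) :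
    laurentCoeff e p = 0 := by
  rw [laurentCoeff, if_neg fun h ↦ (h i).not_gt hi, LinearMap.zero_apply]

lemma exists_neg_or_eq_natCast (e : σ → ℤ) :
    (∃ i, e i < 0) ∨ ∃ m : σ →₀ ℕ, e = fun i ↦ (m i : ℤ) := by
  rw [or_iff_not_imp_left]
  push Not
  exact fun he ↦ ⟨Finsupp.equivFunOnFinite.symm fun i ↦ (e i).toNat, by ext i; simp [he i]⟩

lemma laurentCoeff_monomial_mul (e : σ → ℤ) (m : σ →₀ ℕ) (c : R) (p : MvPolynomial σ R) :
    laurentCoeff e (MvPolynomial.monomial m c * p) = c * laurentCoeff (fun i ↦ e i - m i) p := by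
  obtain ⟨i, hi⟩ | ⟨q, rfl⟩ := exists_neg_or_eq_natCast e
  · rw [laurentCoeff_of_neg hi, laurentCoeff_of_neg (i := i) (by lia), mul_zero]
  rw [laurentCoeff_natCast, MvPolynomial.coeff_monomial_mul']
  split_ifs with hmq
  · simp_rw [← Nat.cast_sub (hmq _), ← Finsupp.tsub_apply, laurentCoeff_natCast]
  · obtain ⟨i, hi⟩ := not_forall.mp hmq
    rw [laurentCoeff_of_neg (i := i) (by lia), mul_zero]

lemma laurentCoeff_cons {n : ℕ} (k : ℕ) (e : Fin n → ℤ) (p : MvPolynomial (Fin (n + 1)) R) :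
    laurentCoeff (Fin.cons (k : ℤ) e) p =
      laurentCoeff e ((MvPolynomial.finSuccEquiv R n p).coeff k) := by
  obtain ⟨i, hi⟩ | ⟨m, rfl⟩ := exists_neg_or_eq_natCast e
  · rw [laurentCoeff_of_neg hi, laurentCoeff_of_neg (i := i.succ) (by simpa using hi)]
  have hcons : Fin.cons (k : ℤ) (fun i ↦ (m i : ℤ)) = fun i ↦ (m.cons k i : ℤ) := by
    ext i
    cases i using Fin.cases <;> simp
  rw [hcons, laurentCoeff_natCast, laurentCoeff_natCast, MvPolynomial.finSuccEquiv_coeff_coeff]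

end LaurentCoeff

section Dyson

lemma prod_univ_erase_succ {M : Type*} [CommMonoid M] {n : ℕ} (f : Fin (n + 1) → M) (j : Fin n) :
    ∏ i ∈ univ.erase j.succ, f i = f 0 * ∏ i ∈ univ.erase j, f i.succ := by
  rw [Fin.univ_succ, erase_cons_of_ne _ (Fin.succ_ne_zero j).symm, prod_cons]
  change f 0 * ∏ i ∈ (univ.map (Fin.succEmb n)).erase (Fin.succEmb n j), f i = _
  rw [← map_erase, prod_map]
  rfl

variable {n : ℕ} (a : Fin n → ℕ)

lemma finSuccEquiv_dysonPoly_cons_zero :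
    MvPolynomial.finSuccEquiv ℤ n (dysonPoly (n + 1) (Fin.cons 0 a)) =
      (∏ j, (Polynomial.C (MvPolynomial.X j) - Polynomial.X) ^ a j) *
        Polynomial.C (dysonPoly n a) := by
  simp [dysonPoly, Fin.prod_univ_succ, prod_univ_erase_succ, prod_mul_distrib,
    MvPolynomial.finSuccEquiv_X_zero, MvPolynomial.finSuccEquiv_X_succ]

lemma dysonCT_eq_laurentCoeff (b : Fin n → ℤ) :
    dysonCT n a b = laurentCoeff (fun j ↦ ((n : ℤ) - 1) * a j + b j) (dysonPoly n a) := by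
  unfold dysonCT laurentCoeff
  split_ifs <;> rfl

lemma dysonCT_cons_zero_eq_laurentCoeff (k : ℕ) (b : Fin n → ℤ) :
    dysonCT (n + 1) (Fin.cons 0 a) (Fin.cons (k : ℤ) b) =
      laurentCoeff (fun j ↦ n * a j + b j)
        (Polynomial.coeff (∏ j, (Polynomial.C (MvPolynomial.X j) - Polynomial.X) ^ a j) k *
          dysonPoly n a) := by
  rw [← Polynomial.coeff_mul_C, ← finSuccEquiv_dysonPoly_cons_zero, ← laurentCoeff_cons,
    dysonCT_eq_laurentCoeff]
  congr 2
  ext j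
  cases j using Fin.cases <;> simp

/-- If some `d j > a j`, the truncated difference `a j - d j` is not the exponent occurring in
`dysonCT`, but then the binomial coefficient vanishes. -/
lemma choose_mul_laurentCoeff_dysonPoly (b : Fin n → ℤ) (d : Fin n → ℕ) :
    (∏ j, ((a j).choose (d j) : ℤ)) *
        laurentCoeff (fun j ↦ n * a j + b j - (a j - d j : ℕ)) (dysonPoly n a) =
      (∏ j, ((a j).choose (d j) : ℤ)) * dysonCT n a fun j ↦ b j + d j := by
  by_cases hd : ∀ j, d j ≤ a j
  · rw [dysonCT_eq_laurentCoeff]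
    congr 3
    ext j
    rw [Nat.cast_sub (hd j)]
    ring
  · obtain ⟨j, hj⟩ := not_forall.mp hd
    have hprod : ∏ j, ((a j).choose (d j) : ℤ) = 0 :=
      prod_eq_zero (mem_univ j) (mod_cast Nat.choose_eq_zero_of_lt (not_le.mp hj))
    rw [hprod, zero_mul, zero_mul]

theorem dysonCT_three_boundary_general (k : ℕ) (b : Fin n → ℤ) :
    dysonCT (n + 1) (Fin.cons 0 a) (Fin.cons (k : ℤ) b) =
      (-1) ^ k * ∑ d ∈ univ.piAntidiag k,
        (∏ j, ((a j).choose (d j) : ℤ)) * dysonCT n a fun j ↦ b j + d j := by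
  rw [dysonCT_cons_zero_eq_laurentCoeff, coeff_prod_C_X_sub_X_pow, sum_mul, map_sum, mul_sum]
  refine sum_congr rfl fun d _ ↦ ?_
  rw [laurentCoeff_monomial_mul, mul_assoc, ← choose_mul_laurentCoeff_dysonPoly]
  rfl

lemma dysonCT_three_of_zero_left (a₂ a₃ k : ℕ) (b₂ b₃ : ℤ) :
    dysonCT 3 ![0, a₂, a₃] ![k, b₂, b₃] =
      (-1) ^ k * ∑ ij ∈ antidiagonal k,
        a₂.choose ij.1 * a₃.choose ij.2 * dysonCT 2 ![a₂, a₃] ![b₂ + ij.1, b₃ + ij.2] := by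
  have add_vec (i j : ℕ) :
      (fun l ↦ (![b₂, b₃] : Fin 2 → ℤ) l + (![i, j] : Fin 2 → ℕ) l) = ![b₂ + i, b₃ + j] := by
    ext l
    fin_cases l <;> rfl
  simpa [piAntidiag_univ_fin_eq_antidiagonalTuple, Nat.antidiagonalTuple_two, add_vec]
    using dysonCT_three_boundary_general ![a₂, a₃] k ![b₂, b₃]

end Dyson

/-- Boundary identity:
`c_3(⟨0, a_2, a_3⟩; ⟨2, -1, -1⟩) = (a_3(a_3-1)/2) c_2(⟨a_2, a_3⟩; ⟨-1, 1⟩)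
  + (a_2(a_2-1)/2) c_2(⟨a_2, a_3⟩; ⟨1, -1⟩) + a_2 a_3 c_2(⟨a_2, a_3⟩; ⟨0, 0⟩)`. -/
theorem dysonCT_three_boundary (a₂ a₃ : ℕ) :
    dysonCT 3 ![0, a₂, a₃] ![2, -1, -1]
      = ((a₃ * (a₃ - 1) / 2 : ℕ) : ℤ) * dysonCT 2 ![a₂, a₃] ![-1, 1]
        + ((a₂ * (a₂ - 1) / 2 : ℕ) : ℤ) * dysonCT 2 ![a₂, a₃] ![1, -1]
        + (a₂ : ℤ) * (a₃ : ℤ) * dysonCT 2 ![a₂, a₃] ![0, 0] := by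
  have expansion : dysonCT 3 ![0, a₂, a₃] ![2, -1, -1] =
      a₃.choose 2 * dysonCT 2 ![a₂, a₃] ![-1, 1] + (a₂ * a₃ * dysonCT 2 ![a₂, a₃] ![0, 0] +
        a₂.choose 2 * dysonCT 2 ![a₂, a₃] ![1, -1]) := by
    simpa [Nat.antidiagonal_succ] using dysonCT_three_of_zero_left a₂ a₃ 2 (-1) (-1)
  rw [← Nat.choose_two_right, ← Nat.choose_two_right, expansion]
  ring
end
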